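/- Let p and q be integers with 4 ≤ p ≤ q and n = p + q. Every tree T ∈ 𝒯_n^{p,q} that is isomorphic to neither B_{p,q}^{0,0} nor B_{p,q}^{0,1} satisfies T ≺_s B_{p,q}^{0,1}; that is, B_{p,q}^{0,1} is the unique second last tree in the S-order among 𝒯_n^{p,q}. -/

import Mathlib

open SimpleGraph

open scoped Classical in
/-- The adjacency matrix of a simple graph, with real entries. -/
noncomputable def adjMat {V : Type*} [Fintype V] (G : SimpleGraph V) : Matrix V V ℝ :=
  Matrix.of fun a b => if G.Adj a b then 1 else 0

/-- The `k`-th spectral moment `S_k(G) = tr(A(G)^k)`. -/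
noncomputable def spectralMoment {V : Type*} [Fintype V] [DecidableEq V]
    (G : SimpleGraph V) (k : ℕ) : ℝ :=
  Matrix.trace (adjMat G ^ k)

/-- `SLt G₁ G₂` means `G₁ ≺_s G₂`: for some `k` with `1 ≤ k ≤ n - 1`,
`S_i(G₁) = S_i(G₂)` for all `i < k` and `S_k(G₁) < S_k(G₂)`. -/
def SLt {V : Type*} [Fintype V] [DecidableEq V] (G₁ G₂ : SimpleGraph V) : Prop :=
  ∃ k : ℕ, 1 ≤ k ∧ k ≤ Fintype.card V - 1 ∧
    (∀ i < k, spectralMoment G₁ i = spectralMoment G₂ i) ∧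
    spectralMoment G₁ k < spectralMoment G₂ k

/-- The tree `B_{p,q}^{k,l}` on `p + q` vertices: vertex `0 = u` is adjacent to `1 = v`
and to the `q - 1` vertices `2, …, q`; the distinguished neighbor `2` of `u` carries the
`k` pendant leaves `q+1, …, q+k`; the `l` neighbors `3, …, l+2` of `u` carry one pendant
leaf each (`q+k+j` is attached to `j+2` for `1 ≤ j ≤ l`); and `v` carries the
`p - k - l - 1` pendant leaves `q+k+l+1, …, p+q-1`. -/
def BTree (p q k l : ℕ) : SimpleGraph (Fin (p + q)) :=
  SimpleGraph.fromRel (fun a b =>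
    (a.val = 0 ∧ b.val = 1) ∨
    (a.val = 0 ∧ 2 ≤ b.val ∧ b.val ≤ q) ∨
    (a.val = 2 ∧ q + 1 ≤ b.val ∧ b.val ≤ q + k) ∨
    (q + k + 1 ≤ b.val ∧ b.val ≤ q + k + l ∧ a.val = b.val - (q + k) + 2) ∨
    (a.val = 1 ∧ q + k + l + 1 ≤ b.val))

/-- The tree `D_{p,q}^{k,l}` on `p + q` vertices: vertex `1 = v` is adjacent to `0 = u`
and to the `p - 1` vertices `2, …, p`; the distinguished neighbor `2` of `v` carries the
`k` pendant leaves `p+1, …, p+k`; the `l` neighbors `3, …, l+2` of `v` carry one pendant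
leaf each; and `u` carries the `q - k - l - 1` pendant leaves `p+k+l+1, …, p+q-1`. -/
def DTree (p q k l : ℕ) : SimpleGraph (Fin (p + q)) :=
  SimpleGraph.fromRel (fun a b =>
    (a.val = 0 ∧ b.val = 1) ∨
    (a.val = 1 ∧ 2 ≤ b.val ∧ b.val ≤ p) ∨
    (a.val = 2 ∧ p + 1 ≤ b.val ∧ b.val ≤ p + k) ∨
    (p + k + 1 ≤ b.val ∧ b.val ≤ p + k + l ∧ a.val = b.val - (p + k) + 2) ∨
    (a.val = 0 ∧ p + k + l + 1 ≤ b.val))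

/-- `T ∈ 𝒯_{p+q}^{p,q}`: `T` is a tree on `p + q` vertices with a `(p,q)`-bipartition. -/
def TreeBip (p q : ℕ) (G : SimpleGraph (Fin (p + q))) : Prop :=
  G.IsTree ∧ ∃ A : Finset (Fin (p + q)), A.card = p ∧
    ∀ ⦃x y : Fin (p + q)⦄, G.Adj x y → (x ∈ A ↔ y ∉ A)

section Moments

variable {V : Type*} [Fintype V]

lemma adjMat_eq_adjMatrix (G : SimpleGraph V) [DecidableRel G.Adj] : adjMat G = G.adjMatrix ℝ := by
  ext a b
  simp [adjMat, adjMatrix_apply]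

variable [DecidableEq V] (G : SimpleGraph V)

lemma spectralMoment_zero : spectralMoment G 0 = Fintype.card V := by
  simp [spectralMoment]

variable [DecidableRel G.Adj]

lemma spectralMoment_one : spectralMoment G 1 = 0 := by
  simp [spectralMoment, adjMat_eq_adjMatrix]

lemma spectralMoment_two : spectralMoment G 2 = ∑ x, (G.degree x : ℝ) := by
  simp only [spectralMoment, adjMat_eq_adjMatrix, pow_two, Matrix.trace, Matrix.diag_apply,
    adjMatrix_mul_self_apply_self]

lemma spectralMoment_three (h : ∀ x y z, G.Adj x y → G.Adj y z → ¬ G.Adj z x) :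
    spectralMoment G 3 = 0 := by
  simp only [spectralMoment, adjMat_eq_adjMatrix, pow_succ, pow_zero, one_mul, Matrix.trace,
    Matrix.diag_apply, Matrix.mul_apply, Finset.sum_mul, adjMatrix_apply]
  refine Finset.sum_eq_zero fun x _ => Finset.sum_eq_zero fun z _ =>
    Finset.sum_eq_zero fun y _ => ?_
  have := h x y z
  split_ifs <;> simp_all

/-- In a graph without 4-cycles, closed walks of length four are counted by degrees. -/
lemma spectralMoment_four
    (h : ∀ x y a b, x ≠ y → G.Adj x a → G.Adj y a → G.Adj x b → G.Adj y b → a = b) :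
    spectralMoment G 4 = 2 * ∑ x, (G.degree x : ℝ) ^ 2 - ∑ x, (G.degree x : ℝ) := by
  set M : Matrix V V ℝ := G.adjMatrix ℝ * G.adjMatrix ℝ with hM
  have hdiag : ∀ x, M x x = G.degree x := fun x => by
    rw [hM, adjMatrix_mul_self_apply_self]
  have hsymm : ∀ x y, M x y = M y x := fun x y => by
    simp only [hM, Matrix.mul_apply]
    refine Finset.sum_congr rfl fun z _ => ?_
    simp only [adjMatrix_apply, G.adj_comm x z, G.adj_comm z y]
    ring
  have hoff : ∀ x y, x ≠ y → M x y * M x y = M x y := fun x y hxy => by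
    by_cases hz : ∃ z, G.Adj x z ∧ G.Adj z y
    · obtain ⟨z, hxz, hzy⟩ := hz
      have : M x y = 1 := by
        simp only [hM, Matrix.mul_apply, adjMatrix_apply]
        rw [Finset.sum_eq_single z]
        · simp [hxz, hzy]
        · intro b _ hb
          by_contra hne
          apply hb
          simp only [mul_ite, mul_one, mul_zero, ite_eq_right_iff, not_forall] at hne
          obtain ⟨hby, hxb, -⟩ := hne
          exact h x y b z hxy hxb hby.symm hxz hzy.symm
        · simp
      rw [this, one_mul]
    · have : M x y = 0 := by
        simp only [hM, Matrix.mul_apply, adjMatrix_apply]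
        refine Finset.sum_eq_zero fun z _ => ?_
        by_contra hne
        simp only [mul_ite, mul_one, mul_zero, ite_eq_right_iff, not_forall] at hne
        obtain ⟨hby, hxb, -⟩ := hne
        exact hz ⟨z, hxb, hby⟩
      rw [this, zero_mul]
  have htotal : ∑ x, ∑ y, M x y = ∑ z, (G.degree z : ℝ) ^ 2 := by
    have hrow : ∀ z, ∑ y, G.adjMatrix ℝ z y = G.degree z := fun z => by
      simp [adjMatrix_apply, ← card_neighborFinset_eq_degree, neighborFinset_eq_filter]
    have hcol : ∀ z, ∑ x, G.adjMatrix ℝ x z = G.degree z := fun z => by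
      rw [← hrow z]
      simp only [adjMatrix_apply, G.adj_comm z]
    calc ∑ x, ∑ y, M x y
        = ∑ x, ∑ z, G.adjMatrix ℝ x z * ∑ y, G.adjMatrix ℝ z y := by
          refine Finset.sum_congr rfl fun x _ => ?_
          simp only [hM, Matrix.mul_apply, Finset.mul_sum]
          exact Finset.sum_comm
      _ = ∑ z, (G.degree z : ℝ) ^ 2 := by
          rw [Finset.sum_comm]
          refine Finset.sum_congr rfl fun z _ => ?_
          rw [← Finset.sum_mul, hrow, hcol, pow_two]
  have htrace : spectralMoment G 4 = ∑ x, ∑ y, M x y * M x y := by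
    have : adjMat G ^ 4 = M * M := by
      rw [adjMat_eq_adjMatrix, hM, ← pow_two, ← pow_two, ← pow_mul]
    simp only [spectralMoment, this, Matrix.trace, Matrix.diag_apply, Matrix.mul_apply]
    exact Finset.sum_congr rfl fun x _ => Finset.sum_congr rfl fun y _ => by rw [hsymm y x]
  have hrowSq : ∀ x, ∑ y, M x y * M x y =
      ∑ y, M x y + ((G.degree x : ℝ) ^ 2 - G.degree x) := fun x => by
    rw [← Finset.add_sum_erase _ _ (Finset.mem_univ x),
      ← Finset.add_sum_erase _ (fun y => M x y) (Finset.mem_univ x), hdiag,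
      Finset.sum_congr rfl fun y hy => hoff x y (Finset.ne_of_mem_erase hy).symm]
    ring
  rw [htrace, Finset.sum_congr rfl fun x _ => hrowSq x, Finset.sum_add_distrib, htotal,
    Finset.sum_sub_distrib]
  ring

variable {G} in
lemma SLt_of_sum_degree_sq_lt {H : SimpleGraph V} [DecidableRel H.Adj]
    (hcard : 5 ≤ Fintype.card V)
    (hG₃ : ∀ x y z, G.Adj x y → G.Adj y z → ¬ G.Adj z x)
    (hH₃ : ∀ x y z, H.Adj x y → H.Adj y z → ¬ H.Adj z x)
    (hG₄ : ∀ x y a b, x ≠ y → G.Adj x a → G.Adj y a → G.Adj x b → G.Adj y b → a = b)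
    (hH₄ : ∀ x y a b, x ≠ y → H.Adj x a → H.Adj y a → H.Adj x b → H.Adj y b → a = b)
    (hsum : ∑ x, G.degree x = ∑ x, H.degree x)
    (hlt : ∑ x, G.degree x ^ 2 < ∑ x, H.degree x ^ 2) : SLt G H := by
  have hsum' : ∑ x, (G.degree x : ℝ) = ∑ x, (H.degree x : ℝ) := by exact_mod_cast hsum
  have hlt' : ∑ x, (G.degree x : ℝ) ^ 2 < ∑ x, (H.degree x : ℝ) ^ 2 := by exact_mod_cast hlt
  refine ⟨4, by norm_num, by omega, fun i hi => ?_, ?_⟩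
  · interval_cases i
    · rw [spectralMoment_zero, spectralMoment_zero]
    · rw [spectralMoment_one, spectralMoment_one]
    · rw [spectralMoment_two, spectralMoment_two, hsum']
    · rw [spectralMoment_three G hG₃, spectralMoment_three H hH₃]
  · rw [spectralMoment_four G hG₄, spectralMoment_four H hH₄, hsum']
    linarith

end Moments

/-- A sum of squares of naturals with prescribed sum `N + 1` is largest when all the weight sits on
one index, next largest when the weights are `N` and `1`, and smaller otherwise. -/
lemma sum_sq_trichotomy {ι : Type*} (s : Finset ι) (a : ι → ℕ) (N : ℕ)
    (hN : 2 ≤ N) (hsum : ∑ i ∈ s, a i = N + 1) :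
    (∃ i ∈ s, a i = N + 1 ∧ ∑ i ∈ s, a i ^ 2 ≤ (N + 1) ^ 2) ∨
    (∃ i ∈ s, a i = N ∧ ∑ i ∈ s, a i ^ 2 ≤ N ^ 2 + 1) ∨
    ∑ i ∈ s, a i ^ 2 < N ^ 2 + 1 := by
  classical
  have hne : s.Nonempty := by
    by_contra h
    simp [Finset.not_nonempty_iff_eq_empty.mp h] at hsum
  obtain ⟨i, hi, hmax⟩ := s.exists_max_image a hne
  have hsplit := Finset.add_sum_erase s a hi
  have hsplitSq := Finset.add_sum_erase s (fun j => a j ^ 2) hi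
  have hrest : ∑ j ∈ s.erase i, a j ^ 2 ≤ (∑ j ∈ s.erase i, a j) ^ 2 :=
    Finset.sum_sq_le_sq_sum_of_nonneg fun j _ => Nat.zero_le _
  have hprod : ∑ j ∈ s, a j ^ 2 ≤ a i * (N + 1) := by
    rw [← hsum, Finset.mul_sum]
    refine Finset.sum_le_sum fun j hj => ?_
    rw [pow_two]
    exact Nat.mul_le_mul_right _ (hmax j hj)
  obtain ⟨r, hr⟩ : ∃ r, r = ∑ j ∈ s.erase i, a j := ⟨_, rfl⟩
  rw [← hr] at hsplit hrest
  rcases Nat.lt_or_ge 1 r with h | h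
  · right; right
    rcases le_total r (a i) with h' | h'
    · nlinarith
    · nlinarith
  · interval_cases r
    · left
      exact ⟨i, hi, by omega, by nlinarith⟩
    · right; left
      obtain rfl : N = a i := by omega
      exact ⟨i, hi, rfl, by omega⟩

lemma SimpleGraph.IsAcyclic.eq_of_common_neighbors {V : Type*} {G : SimpleGraph V}
    (hG : G.IsAcyclic) (x y a b : V) (hxy : x ≠ y) (hxa : G.Adj x a) (hya : G.Adj y a)
    (hxb : G.Adj x b) (hyb : G.Adj y b) : a = b := by
  let w (c : V) (hxc : G.Adj x c) (hyc : G.Adj y c) : G.Walk x y :=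
    .cons hxc (.cons hyc.symm .nil)
  have hw (c : V) (hxc : G.Adj x c) (hyc : G.Adj y c) : (w c hxc hyc).IsPath := by
    simp [w, Walk.cons_isPath_iff, hxc.ne, hyc.ne', hxy]
  have h := congrArg (fun P : G.Path x y => P.1.support)
    ((hG.subsingleton_path x y).elim ⟨w a hxa hya, hw a hxa hya⟩ ⟨w b hxb hyb, hw b hxb hyb⟩)
  simpa [w] using h

section SecondLastTree

variable {p q : ℕ}

/-- The parent of a vertex of `BTree p q 0 1` rooted at `0`. -/
def BTree.parent (q b : ℕ) : ℕ := if b ≤ q then 0 else if b = q + 1 then 3 else 1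

lemma BTree.parent_lt (hq : 4 ≤ q) {b : ℕ} (hb : b ≠ 0) : BTree.parent q b < b := by
  unfold BTree.parent
  split_ifs <;> omega

lemma BTree_zero_one_adj (hq : 4 ≤ q) (a b : Fin (p + q)) :
    (BTree p q 0 1).Adj a b ↔ (b.val ≠ 0 ∧ a.val = BTree.parent q b.val) ∨
      (a.val ≠ 0 ∧ b.val = BTree.parent q a.val) := by
  simp only [BTree, fromRel_adj, BTree.parent, ne_eq, Fin.ext_iff]
  split_ifs <;> omega

lemma BTree_zero_one_triangle_free (hq : 4 ≤ q) (x y z : Fin (p + q))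
    (hxy : (BTree p q 0 1).Adj x y) (hyz : (BTree p q 0 1).Adj y z) :
    ¬ (BTree p q 0 1).Adj z x := by
  rw [BTree_zero_one_adj hq] at *
  have hx := BTree.parent_lt hq (b := x.val)
  have hy := BTree.parent_lt hq (b := y.val)
  have hz := BTree.parent_lt hq (b := z.val)
  unfold BTree.parent at *
  split_ifs at * <;> omega

lemma BTree_zero_one_eq_of_common_neighbors (hq : 4 ≤ q) (x y a b : Fin (p + q)) (hxy : x ≠ y)
    (hxa : (BTree p q 0 1).Adj x a) (hya : (BTree p q 0 1).Adj y a)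
    (hxb : (BTree p q 0 1).Adj x b) (hyb : (BTree p q 0 1).Adj y b) : a = b := by
  rw [BTree_zero_one_adj hq] at *
  have hx := BTree.parent_lt hq (b := x.val)
  have hy := BTree.parent_lt hq (b := y.val)
  have ha := BTree.parent_lt hq (b := a.val)
  have hb := BTree.parent_lt hq (b := b.val)
  rw [ne_eq, Fin.ext_iff] at hxy
  rw [Fin.ext_iff]
  by_contra hab
  rcases hxa with hxa | hxa <;> rcases hya with hya | hya <;> rcases hxb with hxb | hxb <;>
    rcases hyb with hyb | hyb <;> omega

lemma card_filter_fin_val (n : ℕ) (P : ℕ → Prop) [DecidablePred P] (s : Finset ℕ)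
    (hs : ∀ m, m ∈ s ↔ m < n ∧ P m) :
    (Finset.univ.filter fun b : Fin n => P b.val).card = s.card := by
  rw [← Finset.card_map Fin.valEmbedding]
  congr 1
  ext m
  simp only [Finset.mem_map, Finset.mem_filter, Finset.mem_univ, true_and,
    Fin.valEmbedding_apply, hs]
  exact ⟨fun ⟨b, hb, hm⟩ => hm ▸ ⟨b.isLt, hb⟩, fun ⟨hm, hP⟩ => ⟨⟨m, hm⟩, hP, rfl⟩⟩

lemma BTree_zero_one_degree [DecidableRel (BTree p q 0 1).Adj] (hp : 4 ≤ p) (hq : 4 ≤ q)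
    (a : Fin (p + q)) :
    (BTree p q 0 1).degree a =
      if a.val = 0 then q else if a.val = 1 then p - 1 else if a.val = 3 then 2 else 1 := by
  rw [← card_neighborFinset_eq_degree, neighborFinset_eq_filter]
  simp only [BTree_zero_one_adj hq]
  have key (s : Finset ℕ) (hs : ∀ m, m ∈ s ↔ m < p + q ∧ ((m ≠ 0 ∧ a.val = BTree.parent q m) ∨
      (a.val ≠ 0 ∧ m = BTree.parent q a.val))) :=
    card_filter_fin_val (p + q) (fun m => (m ≠ 0 ∧ a.val = BTree.parent q m) ∨
      (a.val ≠ 0 ∧ m = BTree.parent q a.val)) s hs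
  have ha := a.isLt
  split_ifs with h0 h1 h3
  · rw [key (Finset.Icc 1 q)]
    · simp
    · intro m
      simp only [Finset.mem_Icc, BTree.parent]
      split_ifs <;> omega
  · rw [key (insert 0 (Finset.Ico (q + 2) (p + q)))]
    · rw [Finset.card_insert_of_notMem (by simp), Nat.card_Ico]
      omega
    · intro m
      simp only [Finset.mem_insert, Finset.mem_Ico, BTree.parent]
      split_ifs <;> omega
  · rw [key {0, q + 1}]
    · rw [Finset.card_pair (by omega)]
    · intro m
      simp only [Finset.mem_insert, Finset.mem_singleton, BTree.parent]
      split_ifs <;> omega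
  · rw [key {BTree.parent q a.val}]
    · simp
    · intro m
      simp only [Finset.mem_singleton, BTree.parent]
      split_ifs <;> omega

lemma BTree_zero_one_sum_degree (hp : 4 ≤ p) (hq : 4 ≤ q) (f : ℕ → ℕ)
    [DecidableRel (BTree p q 0 1).Adj] :
    ∑ x, f ((BTree p q 0 1).degree x) = f q + f (p - 1) + f 2 + (p + q - 3) * f 1 := by
  obtain ⟨r, hr⟩ : ∃ r, p + q = r + 4 := ⟨p + q - 4, by omega⟩
  simp only [BTree_zero_one_degree hp hq]
  rw [Fin.sum_univ_eq_sum_range (fun m => f (if m = 0 then q else if m = 1 then p - 1 else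
    if m = 3 then 2 else 1)) (p + q), hr]
  simp only [Finset.sum_range_succ']
  simp
  ring

end SecondLastTree

/-- Two elements of a finset of size `k` can be given prescribed labels in an enumeration by
`0, …, k - 1`. -/
lemma exists_labelling {V : Type*} (A : Finset V) {k i j : ℕ} (hA : A.card = k)
    {u w : V} (hu : u ∈ A) (hw : w ∈ A) (huw : u ≠ w) (hi : i < k) (hj : j < k) (hij : i ≠ j) :
    ∃ g : V → ℕ, (∀ x ∈ A, ∀ y ∈ A, g x = g y → x = y) ∧ (∀ x ∈ A, g x < k) ∧
      g u = i ∧ g w = j := by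
  classical
  let e := A.equivFinOfCardEq hA
  let s := Equiv.swap (e ⟨u, hu⟩) ⟨i, hi⟩
  let t := Equiv.swap (s (e ⟨w, hw⟩)) ⟨j, hj⟩
  refine ⟨fun x => if hx : x ∈ A then (t (s (e ⟨x, hx⟩))).val else 0, ?_, ?_, ?_, ?_⟩
  · intro x hx y hy h
    simpa [hx, hy, ← Fin.ext_iff] using h
  · intro x hx
    simp [hx]
  · have hsu : s (e ⟨u, hu⟩) = ⟨i, hi⟩ := Equiv.swap_apply_left _ _
    have hne : s (e ⟨u, hu⟩) ≠ s (e ⟨w, hw⟩) := by simpa using huw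
    rw [hsu] at hne
    have hne' : (⟨i, hi⟩ : Fin k) ≠ ⟨j, hj⟩ := by simpa using hij
    simp [hu, hsu, t, Equiv.swap_apply_of_ne_of_ne hne hne']
  · simp [hw, t]

/-- In a bipartite graph without 4-cycles, let `u ∈ A` be adjacent to all of `Aᶜ` and `v ∉ A` be
adjacent to all of `A` except possibly `w`, which is adjacent to `v` or to `x`. Then the graph is
`B_{p,q}^{0,0}` or `B_{p,q}^{0,1}`. -/
lemma exists_iso_of_dominating {p q : ℕ} (hp : 4 ≤ p) (hq : 4 ≤ q)
    {T : SimpleGraph (Fin (p + q))} {A : Finset (Fin (p + q))} (hA : A.card = p)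
    (hAc : Aᶜ.card = q) (hbip : ∀ ⦃x y⦄, T.Adj x y → (x ∈ A ↔ y ∉ A))
    (h₄ : ∀ x y a b, x ≠ y → T.Adj x a → T.Adj y a → T.Adj x b → T.Adj y b → a = b)
    {u v : Fin (p + q)} (hu : u ∈ A) (hv : v ∉ A) (hub : ∀ b ∉ A, T.Adj u b)
    {w x : Fin (p + q)} (hw : w ∈ A) (hwu : w ≠ u) (hx : x ∉ A) (hxv : x ≠ v)
    (hva : ∀ a ∈ A, a ≠ w → T.Adj v a) (hwvx : T.Adj w v ∨ T.Adj w x) :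
    Nonempty (T ≃g BTree p q 0 0) ∨ Nonempty (T ≃g BTree p q 0 1) := by
  classical
  obtain ⟨g, hginj, hglt, hgu, hgw⟩ :=
    exists_labelling A hA hu hw hwu.symm (i := 0) (j := 1) (by omega) (by omega) (by omega)
  obtain ⟨h, hhinj, hhlt, hhv, hhx⟩ :=
    exists_labelling Aᶜ hAc (Finset.mem_compl.mpr hv) (Finset.mem_compl.mpr hx) hxv.symm
      (i := 0) (j := 2) (by omega) (by omega) (by omega)
  simp only [Finset.mem_compl] at hhinj hhlt
  let f : Fin (p + q) → Fin (p + q) := fun a =>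
    if ha : a ∈ A then
      if g a = 0 then ⟨0, by omega⟩ else ⟨q + g a, by have := hglt a ha; omega⟩
    else ⟨h a + 1, by have := hhlt a ha; omega⟩
  have hfA : ∀ a ∈ A, (f a).val = if g a = 0 then 0 else q + g a := fun a ha => by
    simp only [f, ha, dif_pos]
    split_ifs <;> rfl
  have hfA' : ∀ a ∈ A, (f a).val = 0 ∨ q < (f a).val := fun a ha => by
    rw [hfA a ha]
    split_ifs <;> omega
  have hfB : ∀ a ∉ A, (f a).val = h a + 1 := fun a ha => by simp [f, ha]
  have hfinj : Function.Injective f := by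
    intro a b hab
    have hab' := congrArg Fin.val hab
    by_cases ha : a ∈ A <;> by_cases hb : b ∈ A
    · rw [hfA a ha, hfA b hb] at hab'
      exact hginj a ha b hb (by grind)
    · rw [hfA a ha, hfB b hb] at hab'
      have := hhlt b hb
      grind
    · rw [hfB a ha, hfA b hb] at hab'
      have := hhlt a ha
      grind
    · rw [hfB a ha, hfB b hb] at hab'
      exact hhinj a ha b hb (by omega)
  let e : Fin (p + q) ≃ Fin (p + q) := Equiv.ofBijective f (Finite.injective_iff_bijective.mp hfinj)
  have hgzero : ∀ a ∈ A, g a = 0 ↔ a = u := fun a ha =>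
    ⟨fun h0 => hginj a ha u hu (h0.trans hgu.symm), fun h0 => h0 ▸ hgu⟩
  have hgone : ∀ a ∈ A, g a = 1 ↔ a = w := fun a ha =>
    ⟨fun h0 => hginj a ha w hw (h0.trans hgw.symm), fun h0 => h0 ▸ hgw⟩
  have hhzero : ∀ b ∉ A, h b = 0 ↔ b = v := fun b hb =>
    ⟨fun h0 => hhinj b hb v hv (h0.trans hhv.symm), fun h0 => h0 ▸ hhv⟩
  have hhtwo : ∀ b ∉ A, h b = 2 ↔ b = x := fun b hb =>
    ⟨fun h0 => hhinj b hb x hx (h0.trans hhx.symm), fun h0 => h0 ▸ hhx⟩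
  -- Vertices of `A` other than `u` are leaves.
  have hleaf : ∀ a ∈ A, a ≠ u → ∀ c, T.Adj a c → ∀ b, T.Adj a b ↔ b = c := by
    intro a ha hau c hac b
    refine ⟨fun hab => ?_, fun hbc => hbc ▸ hac⟩
    exact h₄ a u b c hau hab (hub b ((hbip hab).mp ha)) hac (hub c ((hbip hac).mp ha))
  have hiso (H : SimpleGraph (Fin (p + q))) (hHA : ∀ a ∈ A, ∀ b ∈ A, ¬ H.Adj (f a) (f b))
      (hHB : ∀ a ∉ A, ∀ b ∉ A, ¬ H.Adj (f a) (f b))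
      (hH : ∀ a ∈ A, ∀ b ∉ A, H.Adj (f a) (f b) ↔ T.Adj a b) : Nonempty (T ≃g H) := by
    refine ⟨⟨e, ?_⟩⟩
    intro a b
    change H.Adj (f a) (f b) ↔ T.Adj a b
    by_cases ha : a ∈ A <;> by_cases hb : b ∈ A
    · exact iff_of_false (hHA a ha b hb) fun hab => (hbip hab).mp ha hb
    · exact hH a ha b hb
    · rw [H.adj_comm, T.adj_comm]
      exact hH b hb a ha
    · exact iff_of_false (hHB a ha b hb) fun hab => ha ((hbip hab).mpr hb)
  have hadj : ∀ a ∈ A, ∀ b ∉ A, a ≠ u → a ≠ w → (T.Adj a b ↔ h b = 0) := by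
    intro a ha b hb hau haw
    rw [hleaf a ha hau v (hva a ha haw).symm, hhzero b hb]
  rcases hwvx with hwv | hwx
  · left
    refine hiso _ ?_ ?_ ?_
    · intro a ha b hb
      have := hfA' a ha
      have := hfA' b hb
      simp only [BTree, fromRel_adj, ne_eq, Fin.ext_iff]
      omega
    · intro a ha b hb
      have := hhlt a ha
      have := hhlt b hb
      simp only [BTree, fromRel_adj, ne_eq, Fin.ext_iff, hfB a ha, hfB b hb]
      omega
    · intro a ha b hb
      have hlt := hhlt b hb
      simp only [BTree, fromRel_adj, ne_eq, Fin.ext_iff, hfA a ha, hfB b hb]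
      by_cases hau : a = u
      · subst hau
        simp only [hub b hb, hgu]
        simp
        omega
      · have h0 := mt (hgzero a ha).mp hau
        have : T.Adj a b ↔ h b = 0 := by
          by_cases haw : a = w
          · subst haw
            rw [hleaf a ha hau v hwv, hhzero b hb]
          · exact hadj a ha b hb hau haw
        rw [this, if_neg h0]
        omega
  · right
    refine hiso _ ?_ ?_ ?_
    · intro a ha b hb
      have := hfA' a ha
      have := hfA' b hb
      simp only [BTree, fromRel_adj, ne_eq, Fin.ext_iff]
      omega
    · intro a ha b hb
      have := hhlt a ha
      have := hhlt b hb
      simp only [BTree, fromRel_adj, ne_eq, Fin.ext_iff, hfB a ha, hfB b hb]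
      omega
    · intro a ha b hb
      have hlt := hhlt b hb
      simp only [BTree, fromRel_adj, ne_eq, Fin.ext_iff, hfA a ha, hfB b hb]
      by_cases hau : a = u
      · subst hau
        simp only [hub b hb, hgu]
        simp
        omega
      · have h0 := mt (hgzero a ha).mp hau
        rw [if_neg h0]
        by_cases haw : a = w
        · subst haw
          rw [hleaf a ha hau x hwx, ← hhtwo b hb]
          omega
        · have h1 := mt (hgone a ha).mp haw
          rw [hadj a ha b hb hau haw]
          omega

/-- A sum of squared degrees expressed by the excesses `d - 1`. -/
lemma sum_sq_eq_sum_pred_sq {ι : Type*} (s : Finset ι) (d : ι → ℕ) (hd : ∀ i ∈ s, 1 ≤ d i) :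
    ∑ i ∈ s, d i ^ 2 = ∑ i ∈ s, (d i - 1) ^ 2 + 2 * ∑ i ∈ s, (d i - 1) + s.card := by
  rw [Finset.card_eq_sum_ones, Finset.mul_sum, ← Finset.sum_add_distrib,
    ← Finset.sum_add_distrib]
  refine Finset.sum_congr rfl fun i hi => ?_
  obtain ⟨c, hc⟩ := Nat.exists_eq_add_of_le (hd i hi)
  rw [hc, Nat.add_sub_cancel_left]
  ring

section Recognition

variable {p q : ℕ} {T : SimpleGraph (Fin (p + q))} [DecidableRel T.Adj]
  {A : Finset (Fin (p + q))}

lemma adj_of_card_le_degree {V : Type*} [Fintype V] {G : SimpleGraph V} [DecidableRel G.Adj]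
    {B : Finset V} {u : V} (hB : ∀ b, G.Adj u b → b ∈ B) (hcard : B.card ≤ G.degree u) :
    ∀ b ∈ B, G.Adj u b := by
  have hsub : G.neighborFinset u ⊆ B := fun b hb => hB b ((G.mem_neighborFinset u b).mp hb)
  have heq := Finset.eq_of_subset_of_card_le hsub hcard
  intro b hb
  rwa [← heq, mem_neighborFinset] at hb

/-- A tree with a `(p, q)`-bipartition in which some `u ∈ A` has degree `q` and some `v ∉ A` has
degree at least `p - 1` is one of the two last trees. -/
lemma exists_iso_of_degrees (hp : 4 ≤ p) (hq : 4 ≤ q) (hA : A.card = p) (hAc : Aᶜ.card = q)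
    (hbip : ∀ ⦃x y⦄, T.Adj x y → (x ∈ A ↔ y ∉ A))
    (h₄ : ∀ x y a b, x ≠ y → T.Adj x a → T.Adj y a → T.Adj x b → T.Adj y b → a = b)
    (hpos : ∀ x, 1 ≤ T.degree x)
    {u v : Fin (p + q)} (hu : u ∈ A) (hv : v ∉ A) (hdu : T.degree u = q)
    (hdv : p - 1 ≤ T.degree v) :
    Nonempty (T ≃g BTree p q 0 0) ∨ Nonempty (T ≃g BTree p q 0 1) := by
  have hub : ∀ b ∉ A, T.Adj u b := fun b hb =>
    adj_of_card_le_degree (B := Aᶜ) (fun c hc => Finset.mem_compl.mpr ((hbip hc).mp hu))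
      (by omega) b (Finset.mem_compl.mpr hb)
  have hNv : ∀ a, T.Adj v a → a ∈ A := fun a ha => by
    by_contra h
    exact hv ((hbip ha).mpr h)
  by_cases hall : ∃ w ∈ A, ¬ T.Adj v w
  · obtain ⟨w, hw, hvw⟩ := hall
    obtain ⟨x, hwx⟩ := (T.degree_pos_iff_exists_adj w).mp (hpos w)
    have hva : ∀ a ∈ A.erase w, T.Adj v a := by
      refine adj_of_card_le_degree (fun a ha => ?_) ?_
      · exact Finset.mem_erase.mpr ⟨fun h => hvw (h ▸ ha), hNv a ha⟩
      · rw [Finset.card_erase_of_mem hw]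
        omega
    exact exists_iso_of_dominating hp hq hA hAc hbip h₄ hu hv hub hw
      (fun h => hvw (h ▸ (hub v hv).symm)) ((hbip hwx).mp hw)
      (fun h => hvw (h ▸ hwx.symm)) (fun a ha haw => hva a (Finset.mem_erase.mpr ⟨haw, ha⟩))
      (.inr hwx)
  · push Not at hall
    obtain ⟨w, hw, hwu⟩ := Finset.exists_mem_ne (by omega : 1 < A.card) u
    obtain ⟨x, hx, hxv⟩ := Finset.exists_mem_ne (by omega : 1 < Aᶜ.card) v
    exact exists_iso_of_dominating hp hq hA hAc hbip h₄ hu hv hub hw hwu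
      (Finset.mem_compl.mp hx) hxv (fun a ha _ => hall a ha) (.inl (hall w hw).symm)

end Recognition

/-- For `4 ≤ p ≤ q` and `n = p + q`, every tree `T ∈ 𝒯_n^{p,q}`
isomorphic to neither `B_{p,q}^{0,0}` nor `B_{p,q}^{0,1}` satisfies
`T ≺_s B_{p,q}^{0,1}`: `B_{p,q}^{0,1}` is the unique second last tree in the
S-order among `𝒯_n^{p,q}`. -/
theorem stmt_3 (p q : ℕ) (hp : 4 ≤ p) (hpq : p ≤ q)
    (T : SimpleGraph (Fin (p + q))) (hT : TreeBip p q T)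
    (h0 : ¬ Nonempty (T ≃g BTree p q 0 0))
    (h1 : ¬ Nonempty (T ≃g BTree p q 0 1)) :
    SLt T (BTree p q 0 1) := by
  classical
  obtain ⟨hTree, A, hA, hbip⟩ := hT
  have hq : 4 ≤ q := hp.trans hpq
  have hAc : Aᶜ.card = q := by rw [Finset.card_compl, Fintype.card_fin, hA]; omega
  have h₄ := hTree.isAcyclic.eq_of_common_neighbors
  have : Nontrivial (Fin (p + q)) := Fin.nontrivial_iff_two_le.mpr (by omega)
  have hpos : ∀ x, 1 ≤ T.degree x := fun x =>
    hTree.connected.preconnected.degree_pos_of_nontrivial x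
  have hedges : T.edgeFinset.card + 1 = p + q := by
    simpa using hTree.card_edgeFinset
  have hbw : T.IsBipartiteWith (A : Set (Fin (p + q))) (Aᶜ : Finset (Fin (p + q))) := by
    refine ⟨by simpa using disjoint_compl_right, fun x y hxy => ?_⟩
    have := hbip hxy
    simp only [Finset.mem_coe, Finset.mem_compl]
    tauto
  have hpred (B : Finset (Fin (p + q))) :
      ∑ x ∈ B, (T.degree x - 1) + B.card = ∑ x ∈ B, T.degree x := by
    rw [Finset.card_eq_sum_ones, ← Finset.sum_add_distrib]
    exact Finset.sum_congr rfl fun x _ => Nat.sub_add_cancel (hpos x)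
  have hsumA := isBipartiteWith_sum_degrees_eq_card_edges hbw
  have hsumB := isBipartiteWith_sum_degrees_eq_card_edges' hbw
  have hpredA := hpred A
  have hpredB := hpred Aᶜ
  refine SLt_of_sum_degree_sq_lt (by simp; omega) ?_ (BTree_zero_one_triangle_free hq) h₄
    (BTree_zero_one_eq_of_common_neighbors hq) ?_ ?_
  · intro x y z hxy hyz hzx
    have := hbip hxy
    have := hbip hyz
    have := hbip hzx
    tauto
  · rw [BTree_zero_one_sum_degree hp hq (fun d => d), T.sum_degrees_eq_twice_card_edges]
    omega
  · rw [BTree_zero_one_sum_degree hp hq (fun d => d ^ 2),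
      ← Finset.sum_add_sum_compl A, sum_sq_eq_sum_pred_sq A _ fun x _ => hpos x,
      sum_sq_eq_sum_pred_sq Aᶜ _ fun x _ => hpos x]
    obtain ⟨P, rfl⟩ := Nat.exists_eq_add_of_le hp
    obtain ⟨Q, rfl⟩ := Nat.exists_eq_add_of_le hq
    have hSA : ∑ x ∈ A, (T.degree x - 1) = (Q + 2) + 1 := by omega
    have hSB : ∑ x ∈ Aᶜ, (T.degree x - 1) = (P + 2) + 1 := by omega
    have hPQ : P ≤ Q := by omega
    have hsub₁ : 4 + P - 1 = P + 3 := by omega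
    have hsub₂ : 4 + P + (4 + Q) - 3 = P + Q + 5 := by omega
    simp only [hSA, hSB, hA, hAc, hsub₁, hsub₂]
    have hnot : ∀ u ∈ A, ∀ v ∈ Aᶜ, T.degree u - 1 = Q + 2 + 1 →
        ¬ P + 2 ≤ T.degree v - 1 := by
      intro u hu v hv hdu hdv
      rcases exists_iso_of_degrees hp hq hA hAc hbip h₄ hpos hu (Finset.mem_compl.mp hv)
        (by omega) (by omega) with h | h
      · exact h0 h
      · exact h1 h
    have hnot' : P = Q → ∀ u ∈ Aᶜ, ∀ v ∈ A, T.degree u - 1 = P + 2 + 1 →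
        ¬ P + 2 ≤ T.degree v - 1 := by
      intro hPQ' u hu v hv hdu hdv
      rcases exists_iso_of_degrees (A := Aᶜ) hp hq (by omega) (by rw [compl_compl]; omega)
        (fun x y hxy => by have := hbip hxy; simp only [Finset.mem_compl]; tauto) h₄ hpos hu
        (fun h => Finset.mem_compl.mp h hv) (by omega) (by omega) with h | h
      · exact h0 h
      · exact h1 h
    suffices h : ∑ x ∈ A, (T.degree x - 1) ^ 2 + ∑ x ∈ Aᶜ, (T.degree x - 1) ^ 2 <
        (Q + 3) ^ 2 + (P + 2) ^ 2 + 1 by linarith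
    rcases sum_sq_trichotomy A _ (Q + 2) (by omega) hSA with
      ⟨u, hu, hdu, hSqA⟩ | ⟨u, hu, hdu, hSqA⟩ | hSqA <;>
    rcases sum_sq_trichotomy Aᶜ _ (P + 2) (by omega) hSB with
      ⟨v, hv, hdv, hSqB⟩ | ⟨v, hv, hdv, hSqB⟩ | hSqB
    · exact absurd (by omega) (hnot u hu v hv hdu)
    · exact absurd (by omega) (hnot u hu v hv hdu)
    · linarith
    · have hne : P ≠ Q := fun h => hnot' h v hv u hu hdv (by omega)
      have : P < Q := by omega
      linarith
    · linarith
    · linarith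
    · linarith
    · linarith
    · linarith
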